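/- Let L₁ = A_{1,0} + Σᵢ Xᵢ A_{1,i} and L₂ = A_{2,0} + Σᵢ Xᵢ A_{2,i} be linear pencils in n variables of sizes m₁ and m₂ respectively, with A_{1,0} ⪰ 0 and A_{1,0} ≠ 0, and assume the spectrahedron S_{L₁} ⊆ ℝⁿ is bounded and A_{1,0},…,A_{1,n} are linearly independent. Let τ : span(A_{1,0},…,A_{1,n}) → span(A_{2,0},…,A_{2,n}) be the linear map with τ(A_{1,i}) = A_{2,i} for i = 0,…,n. Then: (1) for each d ∈ ℕ, τ is d-positive if and only if 𝔖_{L₁}(d) ⊆ 𝔖_{L₂}(d); (2) τ is completely positive if and only if 𝔖_{L₁}(d) ⊆ 𝔖_{L₂}(d) for all d ∈ ℕ. -/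

import Mathlib

open Matrix
open scoped Kronecker

/-- Evaluation of the linear pencil `L = A 0 + Σᵢ Xᵢ A (i+1)` at a tuple `Z` of `d × d`
matrices: `L(Z) = I_d ⊗ A 0 + Σᵢ Zᵢ ⊗ A (i+1)`. -/
def pencilEvalMat {n m : ℕ} (A : Fin (n+1) → Matrix (Fin m) (Fin m) ℝ) {d : ℕ}
    (Z : Fin n → Matrix (Fin d) (Fin d) ℝ) : Matrix (Fin d × Fin m) (Fin d × Fin m) ℝ :=
  (1 : Matrix (Fin d) (Fin d) ℝ) ⊗ₖ A 0 + ∑ i : Fin n, Z i ⊗ₖ A i.succ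

/-- The inclusion `𝔖_{L₁}(d) ⊆ 𝔖_{L₂}(d)` of the `d`-th levels of the matricial
spectrahedra of two pencils. -/
def matricialIncl {n m₁ m₂ : ℕ} (A₁ : Fin (n+1) → Matrix (Fin m₁) (Fin m₁) ℝ)
    (A₂ : Fin (n+1) → Matrix (Fin m₂) (Fin m₂) ℝ) (d : ℕ) : Prop :=
  ∀ Z : Fin n → Matrix (Fin d) (Fin d) ℝ, (∀ i, (Z i).IsSymm) →
    (pencilEvalMat A₁ Z).PosSemidef → (pencilEvalMat A₂ Z).PosSemidef

/-- `d`-positivity of the linear map `τ : span(A₁ᵢ) → span(A₂ᵢ)`, `A₁ᵢ ↦ A₂ᵢ`: since the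
`A₁ᵢ` are linearly independent, a general element of `ℝ^{d×d} ⊗ span(A₁ᵢ)` is uniquely of
the form `Λ ⊗ A₁₀ + Σᵢ Zᵢ ⊗ A₁ᵢ`, and the ampliation `τ_d = I_d ⊗ τ` sends it to
`Λ ⊗ A₂₀ + Σᵢ Zᵢ ⊗ A₂ᵢ`; `τ` is `d`-positive when `τ_d` preserves positive
semidefiniteness. -/
def tauDPos {n m₁ m₂ : ℕ} (A₁ : Fin (n+1) → Matrix (Fin m₁) (Fin m₁) ℝ)
    (A₂ : Fin (n+1) → Matrix (Fin m₂) (Fin m₂) ℝ) (d : ℕ) : Prop :=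
  ∀ (Λ : Matrix (Fin d) (Fin d) ℝ) (Z : Fin n → Matrix (Fin d) (Fin d) ℝ),
    (Λ ⊗ₖ A₁ 0 + ∑ i : Fin n, Z i ⊗ₖ A₁ i.succ).PosSemidef →
    (Λ ⊗ₖ A₂ 0 + ∑ i : Fin n, Z i ⊗ₖ A₂ i.succ).PosSemidef

/-!
Homogenise: `d`-positivity of `τ` says that `∑ₖ Yₖ ⊗ A₁ₖ ⪰ 0` implies `∑ₖ Yₖ ⊗ A₂ₖ ⪰ 0`, and the
matricial inclusion is the special case of Hermitian `Yₖ` with `Y₀ = 1`. Let `∑ₖ Yₖ ⊗ A₁ₖ ⪰ 0`.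
Linear independence makes every `Yₖ` Hermitian. Compressing by a vector `v` gives
`∑ₖ cₖ A₁ₖ ⪰ 0` with `cₖ = v* Yₖ v`. If `c₀` were negative, then `∑_{k ≠ 0} cₖ A₁ₖ ⪰ -c₀ A₁₀ ⪰ 0`
would make `(cₖ)_{k ≠ 0}` a recession direction of the bounded spectrahedron, hence zero, and
`c₀ A₁₀ ⪰ 0` would contradict `A₁₀ ⪰ 0`, `A₁₀ ≠ 0`. So `Y₀ ⪰ 0`. For `ε > 0` the matrix `Y₀ + ε`
is positive definite, and a congruence by `(Y₀ + ε)^(-1/2)` reduces to the case `Y₀ = 1`. Finally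
let `ε → 0`, using that the positive semidefinite cone is closed.
-/

lemma eq_zero_of_isBounded_of_forall_add_smul_mem {E : Type*} [NormedAddCommGroup E]
    [NormedSpace ℝ E] {s : Set E} (hs : Bornology.IsBounded s) {a u : E}
    (h : ∀ t : ℝ, 0 ≤ t → a + t • u ∈ s) : u = 0 := by
  obtain ⟨R, hR⟩ := hs.exists_norm_le
  have hbound (t : ℝ) (ht : 0 ≤ t) : t * ‖u‖ ≤ R + ‖a‖ := calc
    t * ‖u‖ = ‖(a + t • u) - a‖ := by rw [add_sub_cancel_left, norm_smul, Real.norm_of_nonneg ht]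
    _ ≤ ‖a + t • u‖ + ‖a‖ := norm_sub_le _ _
    _ ≤ R + ‖a‖ := by gcongr; exact hR _ (h t ht)
  by_contra hu
  obtain ⟨m, hm⟩ := exists_lt_nsmul (norm_pos_iff.mpr hu) (R + ‖a‖)
  rw [nsmul_eq_mul] at hm
  exact hm.not_ge (hbound m m.cast_nonneg)

section PosSemidef

open scoped ComplexOrder

variable {𝕜 p : Type*} [RCLike 𝕜]

lemma isClosed_setOf_posSemidef [Finite p] : IsClosed {M : Matrix p p 𝕜 | M.PosSemidef} := by
  cases nonempty_fintype p
  simp only [posSemidef_iff_dotProduct_mulVec, Set.ofPred_and, Set.ofPred_forall]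
  exact (isClosed_eq (by fun_prop) continuous_id).inter
    (isClosed_iInter fun x => isClosed_le continuous_const (by fun_prop))

lemma posSemidef_of_forall_pos_add_smul [Finite p] {M N : Matrix p p 𝕜}
    (h : ∀ ε : ℝ, 0 < ε → (M + ε • N).PosSemidef) : M.PosSemidef := by
  have hlim : Filter.Tendsto (fun ε : ℝ => M + ε • N) (nhdsWithin 0 (Set.Ioi 0)) (nhds M) :=
    (Continuous.tendsto' (by fun_prop) _ _ (by simp)).mono_left nhdsWithin_le_nhds
  exact isClosed_setOf_posSemidef.mem_of_tendsto hlim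
    (Filter.eventually_of_mem self_mem_nhdsWithin h)

open scoped MatrixOrder in
lemma nonneg_of_smul_posSemidef {M : Matrix p p 𝕜} (hM : M.PosSemidef) (hM₀ : M ≠ 0) {c : ℝ}
    (hc : (c • M).PosSemidef) : 0 ≤ c := by
  by_contra! hneg
  have hneg_psd : (-M).PosSemidef := by
    have := hc.smul (inv_nonneg.mpr (neg_nonneg.mpr hneg.le))
    rwa [smul_smul, inv_neg, neg_mul, inv_mul_cancel₀ hneg.ne, neg_one_smul] at this
  exact hM₀ (le_antisymm (neg_nonneg.mp hneg_psd.nonneg) hM.nonneg)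

open scoped MatrixOrder Matrix.Norms.L2Operator in
lemma exists_isUnit_conjTranspose_mul_mul_eq_one [Fintype p] [DecidableEq p] {M : Matrix p p 𝕜}
    (hM : M.PosDef) : ∃ C : Matrix p p 𝕜, IsUnit C ∧ Cᴴ * M * C = 1 := by
  obtain ⟨B, hB, rfl⟩ :=
    CStarAlgebra.isStrictlyPositive_iff_eq_star_mul_self.mp hM.isStrictlyPositive
  lift B to (Matrix p p 𝕜)ˣ using hB
  refine ⟨↑B⁻¹, Units.isUnit _, ?_⟩
  calc (↑B⁻¹ : Matrix p p 𝕜)ᴴ * (star ↑B * ↑B) * ↑B⁻¹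
      = (↑B * ↑B⁻¹ : Matrix p p 𝕜)ᴴ * (↑B * ↑B⁻¹) := by
        simp only [star_eq_conjTranspose, conjTranspose_mul, Matrix.mul_assoc]
    _ = 1 := by rw [B.mul_inv, conjTranspose_one, Matrix.one_mul]

end PosSemidef

section HomPencil

variable {R κ p q r : Type*} [Fintype κ]

/-- The homogeneous linear pencil `∑ₖ Xₖ Aₖ` evaluated at a tuple `Y` of square matrices:
`∑ₖ Yₖ ⊗ Aₖ`. For `Y k₀ = 1` this is the value of the pencil with constant term `A k₀`. -/
def homPencilEval [NonUnitalNonAssocSemiring R] (A : κ → Matrix r r R) (Y : κ → Matrix p p R) :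
    Matrix (p × r) (p × r) R :=
  ∑ k, Y k ⊗ₖ A k

lemma homPencilEval_add_single [NonUnitalNonAssocSemiring R] [DecidableEq κ]
    (A : κ → Matrix r r R) (Y : κ → Matrix p p R) (k₀ : κ) (M : Matrix p p R) :
    homPencilEval A (Y + Pi.single k₀ M) = homPencilEval A Y + M ⊗ₖ A k₀ := by
  simp only [homPencilEval, Pi.add_apply, add_kronecker, Finset.sum_add_distrib]
  have hsum : ∑ k, (Pi.single k₀ M : κ → Matrix p p R) k ⊗ₖ A k = M ⊗ₖ A k₀ := by
    rw [Fintype.sum_eq_single k₀ fun k hk => by rw [Pi.single_eq_of_ne hk, zero_kronecker],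
      Pi.single_eq_same]
  rw [hsum]

section StarRing

variable [CommRing R] [StarRing R] [Fintype p]

lemma homPencilEval_conjTranspose_mul_mul [Fintype r] [DecidableEq r] (A : κ → Matrix r r R)
    (Y : κ → Matrix p p R) (C : Matrix p q R) :
    homPencilEval A (fun k => Cᴴ * Y k * C) =
      (C ⊗ₖ (1 : Matrix r r R))ᴴ * homPencilEval A Y * (C ⊗ₖ (1 : Matrix r r R)) := by
  simp only [homPencilEval, conjTranspose_kronecker, conjTranspose_one, Matrix.mul_sum,
    Matrix.sum_mul, ← mul_kronecker_mul, Matrix.one_mul, Matrix.mul_one]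

variable [PartialOrder R] [Finite r]

lemma posSemidef_homPencilEval_conjTranspose_mul_mul [Finite q] {A : κ → Matrix r r R}
    {Y : κ → Matrix p p R} (h : (homPencilEval A Y).PosSemidef) (C : Matrix p q R) :
    (homPencilEval A fun k => Cᴴ * Y k * C).PosSemidef := by
  classical
  cases nonempty_fintype q
  cases nonempty_fintype r
  rw [homPencilEval_conjTranspose_mul_mul]
  exact h.conjTranspose_mul_mul_same _

lemma posSemidef_homPencilEval_conjTranspose_mul_mul_iff [DecidableEq p] {A : κ → Matrix r r R}
    {Y : κ → Matrix p p R} {C : Matrix p p R} (hC : IsUnit C) :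
    (homPencilEval A fun k => Cᴴ * Y k * C).PosSemidef ↔ (homPencilEval A Y).PosSemidef := by
  classical
  cases nonempty_fintype r
  rw [homPencilEval_conjTranspose_mul_mul]
  exact (hC.kronecker isUnit_one).posSemidef_star_left_conjugate_iff

lemma posSemidef_sum_dotProduct_mulVec_smul {A : κ → Matrix r r R} {Y : κ → Matrix p p R}
    (h : (homPencilEval A Y).PosSemidef) (v : p → R) :
    (∑ k, (star v ⬝ᵥ (Y k *ᵥ v)) • A k).PosSemidef := by
  convert (posSemidef_homPencilEval_conjTranspose_mul_mul h (replicateCol Unit v)).submatrix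
    (Prod.mk ()) using 1
  ext i j
  simp [homPencilEval, Matrix.sum_apply, Matrix.mul_assoc, Matrix.mul_apply, dotProduct, mulVec]

end StarRing

lemma isHermitian_of_isHermitian_homPencilEval [CommRing R] [StarRing R]
    {A : κ → Matrix r r R} {Y : κ → Matrix p p R} (hA : ∀ k, (A k).IsHermitian)
    (hli : LinearIndependent R A) (h : (homPencilEval A Y).IsHermitian) (k : κ) :
    (Y k).IsHermitian := by
  ext a b
  refine sub_eq_zero.mp (Fintype.linearIndependent_iff.mp hli
    (fun k => (Y k)ᴴ a b - Y k a b) ?_ k)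
  ext i j
  have hij := h.apply (a, i) (b, j)
  simp only [homPencilEval, Matrix.sum_apply, kronecker_apply, star_sum, star_mul', (hA _).apply]
    at hij
  simp only [Matrix.sum_apply, Matrix.smul_apply, smul_eq_mul, sub_mul, Finset.sum_sub_distrib,
    Matrix.zero_apply, sub_eq_zero, conjTranspose_apply, hij]

end HomPencil

section Spectrahedron

open scoped ComplexOrder

variable {𝕜 κ p r s : Type*} [RCLike 𝕜] [Fintype κ] {A : κ → Matrix r r 𝕜}
  {A₁ : κ → Matrix r r 𝕜} {A₂ : κ → Matrix s s 𝕜} {k₀ : κ} {Y : κ → Matrix p p 𝕜}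

/-- The spectrahedron of the linear pencil with constant term `A k₀` and remaining coefficients
`A k`, as a subset of the affine hyperplane `x k₀ = 1`. -/
def spectrahedron (A : κ → Matrix r r 𝕜) (k₀ : κ) : Set (κ → ℝ) :=
  {x | x k₀ = 1 ∧ (∑ k, x k • A k).PosSemidef}

/-- Positivity of the ampliation to `p × p` matrices of the linear map `A₁ k ↦ A₂ k` between the
spans of two tuples, for linearly independent `A₁`. An element of `𝕜^(p×p) ⊗ span A₁` is written as
`∑ₖ Yₖ ⊗ A₁ₖ`. -/
def AmpliationPositive (p : Type*) (A₁ : κ → Matrix r r 𝕜) (A₂ : κ → Matrix s s 𝕜) : Prop :=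
  ∀ Y : κ → Matrix p p 𝕜, (homPencilEval A₁ Y).PosSemidef → (homPencilEval A₂ Y).PosSemidef

/-- Inclusion of the matricial spectrahedra of two linear pencils with constant terms `A₁ k₀` and
`A₂ k₀`, at the level of Hermitian `p × p` matrices; the constant term is encoded by `Y k₀ = 1`. -/
def MatricialInclusion (p : Type*) [DecidableEq p] (A₁ : κ → Matrix r r 𝕜) (A₂ : κ → Matrix s s 𝕜)
    (k₀ : κ) : Prop :=
  ∀ Y : κ → Matrix p p 𝕜, (∀ k, (Y k).IsHermitian) → Y k₀ = 1 →
    (homPencilEval A₁ Y).PosSemidef → (homPencilEval A₂ Y).PosSemidef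

lemma nonneg_of_posSemidef_sum_smul (hpsd : (A k₀).PosSemidef)
    (hne : A k₀ ≠ 0) (hbdd : Bornology.IsBounded (spectrahedron A k₀)) {c : κ → ℝ}
    (hc : (∑ k, c k • A k).PosSemidef) : 0 ≤ c k₀ := by
  classical
  by_contra! hneg
  have hray : c - c k₀ • Pi.single k₀ 1 = 0 := by
    refine eq_zero_of_isBounded_of_forall_add_smul_mem hbdd (a := Pi.single k₀ 1) fun t ht =>
      ⟨by simp, ?_⟩
    have hsum : ∑ k, (Pi.single k₀ 1 + t • (c - c k₀ • Pi.single k₀ 1) : κ → ℝ) k • A k =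
        A k₀ + t • (∑ k, c k • A k + (-c k₀) • A k₀) := by
      simp [add_smul, Finset.sum_add_distrib, Pi.single_apply, Finset.smul_sum,
        mul_smul, sub_eq_add_neg]
    rw [hsum]
    exact hpsd.add ((hc.add (hpsd.smul (neg_nonneg.mpr hneg.le))).smul ht)
  have hc₀ : ∑ k, c k • A k = c k₀ • A k₀ := by
    rw [sub_eq_zero.mp hray]
    simp [Pi.single_apply]
  exact hneg.not_ge (nonneg_of_smul_posSemidef hpsd hne (hc₀ ▸ hc))

variable [Finite r]

lemma posSemidef_leadingCoeff [Finite p] (hpsd : (A k₀).PosSemidef)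
    (hne : A k₀ ≠ 0) (hbdd : Bornology.IsBounded (spectrahedron A k₀))
    (hY : ∀ k, (Y k).IsHermitian) (h : (homPencilEval A Y).PosSemidef) : (Y k₀).PosSemidef := by
  cases nonempty_fintype p
  refine .of_dotProduct_mulVec_nonneg (hY k₀) fun v => ?_
  have hreal (k : κ) : ∃ c : ℝ, star v ⬝ᵥ Y k *ᵥ v = c :=
    ⟨RCLike.re (star v ⬝ᵥ Y k *ᵥ v), RCLike.ext (RCLike.ofReal_re _).symm
      (by rw [(hY k).im_star_dotProduct_mulVec_self, RCLike.ofReal_im])⟩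
  choose c hc using hreal
  have hsum := posSemidef_sum_dotProduct_mulVec_smul h v
  simp only [hc, ← RCLike.real_smul_eq_coe_smul] at hsum
  rw [hc]
  exact RCLike.ofReal_nonneg.mpr (nonneg_of_posSemidef_sum_smul hpsd hne hbdd hsum)

variable [Finite p] [DecidableEq p] [Finite s]

lemma MatricialInclusion.posSemidef_of_posDef (hincl : MatricialInclusion p A₁ A₂ k₀)
    (hY : ∀ k, (Y k).IsHermitian) (hY₀ : (Y k₀).PosDef) (h : (homPencilEval A₁ Y).PosSemidef) :
    (homPencilEval A₂ Y).PosSemidef := by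
  cases nonempty_fintype p
  obtain ⟨C, hC, hCY⟩ := exists_isUnit_conjTranspose_mul_mul_eq_one hY₀
  rw [← posSemidef_homPencilEval_conjTranspose_mul_mul_iff hC] at h ⊢
  exact hincl _ (fun k => isHermitian_conjTranspose_mul_mul C (hY k)) hCY h

theorem tau_dPos_iff_matricial_inclusion_general (hA₁ : ∀ k, (A₁ k).IsHermitian)
    (hpsd : (A₁ k₀).PosSemidef) (hne : A₁ k₀ ≠ 0)
    (hbdd : Bornology.IsBounded (spectrahedron A₁ k₀)) (hli : LinearIndependent 𝕜 A₁) :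
    AmpliationPositive p A₁ A₂ ↔ MatricialInclusion p A₁ A₂ k₀ := by
  classical
  cases nonempty_fintype p
  cases nonempty_fintype r
  refine ⟨fun hpos Y _ _ => hpos Y, fun hincl Y h => ?_⟩
  have hY := isHermitian_of_isHermitian_homPencilEval hA₁ hli h.isHermitian
  have hY₀ := posSemidef_leadingCoeff hpsd hne hbdd hY h
  refine posSemidef_of_forall_pos_add_smul (N := (1 : Matrix p p 𝕜) ⊗ₖ A₂ k₀) fun ε hε => ?_
  have hε₁ : (ε • (1 : Matrix p p 𝕜)).PosDef := PosDef.one.smul hε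
  rw [← smul_kronecker, ← homPencilEval_add_single]
  refine hincl.posSemidef_of_posDef (fun k => (hY k).add ?_) ?_ ?_
  · obtain rfl | hk := eq_or_ne k k₀
    · simpa using hε₁.isHermitian
    · simp [hk]
  · simpa using PosDef.posSemidef_add hY₀ hε₁
  · rw [homPencilEval_add_single]
    exact h.add (hε₁.posSemidef.kronecker hpsd)

end Spectrahedron

section FinSucc

variable {n m₁ m₂ d : ℕ}

lemma homPencilEval_cons {R p r : Type*} [NonUnitalNonAssocSemiring R]
    (A : Fin (n + 1) → Matrix r r R) (Λ : Matrix p p R) (Z : Fin n → Matrix p p R) :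
    homPencilEval A (Fin.cons Λ Z : Fin (n + 1) → Matrix p p R) =
      Λ ⊗ₖ A 0 + ∑ i : Fin n, Z i ⊗ₖ A i.succ := by
  simp [homPencilEval, Fin.sum_univ_succ]

lemma tauDPos_iff_ampliationPositive {A₁ : Fin (n + 1) → Matrix (Fin m₁) (Fin m₁) ℝ}
    {A₂ : Fin (n + 1) → Matrix (Fin m₂) (Fin m₂) ℝ} :
    tauDPos A₁ A₂ d ↔ AmpliationPositive (Fin d) A₁ A₂ := by
  simp only [tauDPos, AmpliationPositive, Fin.forall_fin_succ_pi, homPencilEval_cons]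

lemma matricialIncl_iff_matricialInclusion {A₁ : Fin (n + 1) → Matrix (Fin m₁) (Fin m₁) ℝ}
    {A₂ : Fin (n + 1) → Matrix (Fin m₂) (Fin m₂) ℝ} :
    matricialIncl A₁ A₂ d ↔ MatricialInclusion (Fin d) A₁ A₂ 0 := by
  simp only [matricialIncl, MatricialInclusion, pencilEvalMat, Fin.forall_fin_succ_pi,
    Fin.forall_fin_succ, Fin.cons_zero, Fin.cons_succ, homPencilEval_cons, isHermitian_iff_isSymm]
  constructor
  · rintro h _ Z ⟨-, hZ⟩ rfl
    exact h Z hZ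
  · exact fun h Z hZ => h 1 Z ⟨isSymm_one, hZ⟩ rfl

open scoped ComplexOrder in
lemma isBounded_spectrahedron_zero {𝕜 r : Type*} [RCLike 𝕜] {A : Fin (n + 1) → Matrix r r 𝕜}
    (hbdd : Bornology.IsBounded
      {x : Fin n → ℝ | (A 0 + ∑ i : Fin n, x i • A i.succ).PosSemidef}) :
    Bornology.IsBounded (spectrahedron A 0) := by
  obtain ⟨R, hR⟩ := hbdd.exists_norm_le
  refine isBounded_iff_forall_norm_le.mpr ⟨max 1 R, fun x ⟨hx₀, hx⟩ => ?_⟩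
  rw [Fin.sum_univ_succ, hx₀, one_smul] at hx
  refine (pi_norm_le_iff_of_nonneg (by positivity)).mpr (Fin.cases ?_ fun i => ?_)
  · simp [hx₀]
  · exact (norm_le_pi_norm (fun i : Fin n => x i.succ) i).trans ((hR _ hx).trans (le_max_right _ _))

end FinSucc

/-- **Theorem.** Let `L₁, L₂` be linear pencils with `A₁₀ ⪰ 0`, `A₁₀ ≠ 0`, bounded
spectrahedron `S_{L₁}` and linearly independent coefficients `A₁₀, …, A₁ₙ`, and let
`τ : span(A₁ᵢ) → span(A₂ᵢ)` be the linear map `A₁ᵢ ↦ A₂ᵢ`. Then (1) for each `d`, `τ` is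
`d`-positive iff `𝔖_{L₁}(d) ⊆ 𝔖_{L₂}(d)`; and (2) `τ` is completely positive iff
`𝔖_{L₁}(d) ⊆ 𝔖_{L₂}(d)` for all `d`. -/
theorem tau_dPos_iff_matricial_inclusion
    (n m₁ m₂ : ℕ)
    (A₁ : Fin (n+1) → Matrix (Fin m₁) (Fin m₁) ℝ)
    (A₂ : Fin (n+1) → Matrix (Fin m₂) (Fin m₂) ℝ)
    (hsymm₁ : ∀ i, (A₁ i).IsSymm) (hsymm₂ : ∀ i, (A₂ i).IsSymm)
    (hA₀psd : (A₁ 0).PosSemidef) (hA₀ne : A₁ 0 ≠ 0)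
    (hbdd : Bornology.IsBounded
      {x : Fin n → ℝ | (A₁ 0 + ∑ i : Fin n, x i • A₁ i.succ).PosSemidef})
    (hli : LinearIndependent ℝ A₁) :
    (∀ d : ℕ, tauDPos A₁ A₂ d ↔ matricialIncl A₁ A₂ d) ∧
      ((∀ d : ℕ, tauDPos A₁ A₂ d) ↔ (∀ d : ℕ, matricialIncl A₁ A₂ d)) := by
  have key (d : ℕ) : tauDPos A₁ A₂ d ↔ matricialIncl A₁ A₂ d := by
    rw [tauDPos_iff_ampliationPositive, matricialIncl_iff_matricialInclusion]
    exact tau_dPos_iff_matricial_inclusion_general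
      (fun i => isHermitian_iff_isSymm.mpr (hsymm₁ i)) hA₀psd hA₀ne
      (isBounded_spectrahedron_zero hbdd) hli
  exact ⟨key, forall_congr' key⟩
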